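/- Boundary points are not swallowed by finite-energy multiradial Loewner flow. Fix T > 0 and let θ : [0,T] → 𝒳ₙ be continuous. Fix j ∈ {1,…,n} and τ ∈ (0,T], and suppose ξ : [0,τ) → ℝ is locally absolutely continuous with θ^j_t < ξ_t < θ^{j+1}_t for all t ∈ [0,τ) (with the convention θ^{n+1} = θ¹ + 2π), satisfying the multiradial Loewner ODE ξ'_t = Σ_{k=1}^n cot((ξ_t − θ^k_t)/2) for almost every t. If liminf_{t→τ⁻} min( ξ_t − θ^j_t , θ^{j+1}_t − ξ_t ) = 0, then J_T(θ) = ∞. -/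

import Mathlib

open MeasureTheory Filter Set
open scoped Real Topology ENNReal Classical

noncomputable section

/-- The configuration space `𝒳ₙ` of `n` ordered points on (a lift of) the circle:
`θ¹ < θ² < ⋯ < θⁿ < θ¹ + 2π`. -/
def Xspace (n : ℕ) : Set (Fin n → ℝ) :=
  {x | StrictMono x ∧ ∀ i j : Fin n, x i < x j + 2 * π}

/-- The value `θ^{j+1}`, with the convention `θ^{n+1} = θ¹ + 2π`. -/
def nextVal {n : ℕ} (x : Fin n → ℝ) (j : Fin n) : ℝ :=
  if h : (j : ℕ) + 1 < n then x ⟨(j : ℕ) + 1, h⟩ else x ⟨0, j.pos⟩ + 2 * π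

/-- The gap `θ^{j+1} - θ^j` (with wrap-around convention). -/
def gap {n : ℕ} (x : Fin n → ℝ) (j : Fin n) : ℝ := nextVal x j - x j

/-- The minimal gap `Δ(θ) = min_j (θ^{j+1} - θ^j)`. -/
def minGap {n : ℕ} (x : Fin n → ℝ) : ℝ := ⨅ j : Fin n, gap x j

/-- `d(θ) := max_j |2π/n - (θ^{j+1} - θ^j)|`. -/
def dGap {n : ℕ} (x : Fin n → ℝ) : ℝ := ⨆ j : Fin n, |2 * π / n - gap x j|

/-- `φ^j(θ) = ∑_{k ≠ j} cot((θ^j - θ^k)/2)`. -/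
def phi {n : ℕ} (x : Fin n → ℝ) (j : Fin n) : ℝ :=
  ∑ k ∈ Finset.univ.erase j, Real.cot ((x j - x k) / 2)

/-- `φ_a^j := (a/4) φ^j`. -/
def phiA {n : ℕ} (a : ℝ) (x : Fin n → ℝ) (j : Fin n) : ℝ := a / 4 * phi x j

/-- Absolute continuity of every coordinate of `θ` on `[0, T]`: each component is the
integral of a (locally) integrable function. -/
def AbsCont {n : ℕ} (T : ℝ) (θ : ℝ → Fin n → ℝ) : Prop :=
  ∃ v : ℝ → Fin n → ℝ, (∀ j, IntegrableOn (fun s => v s j) (Icc 0 T)) ∧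
    ∀ t ∈ Icc (0 : ℝ) T, ∀ j, θ t j = θ 0 j + ∫ s in (0 : ℝ)..t, v s j

/-- Truncated multiradial Dirichlet energy `J_T(θ)`. -/
def mEnergy (n : ℕ) (T : ℝ) (θ : ℝ → Fin n → ℝ) : ℝ≥0∞ :=
  if AbsCont T θ then
    ENNReal.ofReal (1 / 2) *
      ∫⁻ s in Ioc (0 : ℝ) T,
        ENNReal.ofReal (∑ j, (deriv (fun t => θ t j) s - 2 * phi (θ s) j) ^ 2)
  else ⊤

/-- Multiradial Dirichlet energy `J(θ) = lim_{T→∞} J_T(θ)`, the supremum of the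
nondecreasing family `J_T(θ)`. -/
def mEnergyInf (n : ℕ) (θ : ℝ → Fin n → ℝ) : ℝ≥0∞ := ⨆ T : ℝ, mEnergy n T θ

/-- Absolute continuity of a scalar function on `[0,b]`. -/
def AbsCont1 (b : ℝ) (f : ℝ → ℝ) : Prop :=
  ∃ v : ℝ → ℝ, IntegrableOn v (Icc 0 b) ∧
    ∀ t ∈ Icc (0 : ℝ) b, f t = f 0 + ∫ s in (0 : ℝ)..t, v s

/-!
With `cₖ = cot ((ξ - θᵏ)/2)`, the potential `V = ∑ₖ log |sin ((ξ - θᵏ)/2)|` satisfies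
`V' = ½ ∑ₖ cₖ (∑ₗ cₗ - θ̇ᵏ)` along the flow. The cotangent subtraction formula gives
`(∑ₖ cₖ)² = ∑ₖ cₖ² + 2 ∑ₖ cₖ φᵏ - n (n - 1)`, so that
`V' = ½ ∑ₖ (cₖ² - cₖ (θ̇ᵏ - 2 φᵏ)) - n (n - 1) / 2`, and completing the square bounds this below by
`-⅛ ∑ₖ (θ̇ᵏ - 2 φᵏ)² - n (n - 1) / 2`. Hence `V` drops by at most a quarter of the energy plus a
multiple of the elapsed time. Since `V ≤ log |sin ((ξ - θᵏ)/2)|` for every `k`, finite energy keeps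
`ξ` at a positive distance from the endpoints of its arc.
-/

section Cotangent

theorem real_cot_neg (a : ℝ) : Real.cot (-a) = -Real.cot a := by
  simp only [Real.cot_eq_cos_div_sin, Real.cos_neg, Real.sin_neg, div_neg]

theorem real_cot_mul_cot {a b : ℝ} (ha : Real.sin a ≠ 0) (hb : Real.sin b ≠ 0)
    (hab : Real.sin (b - a) ≠ 0) :
    Real.cot a * Real.cot b = Real.cot (b - a) * (Real.cot a - Real.cot b) - 1 := by
  have hsub : Real.cot a - Real.cot b = Real.sin (b - a) / (Real.sin a * Real.sin b) := by
    rw [Real.cot_eq_cos_div_sin, Real.cot_eq_cos_div_sin, Real.sin_sub]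
    field_simp
  rw [hsub]
  simp only [Real.cot_eq_cos_div_sin]
  field_simp
  rw [Real.cos_sub]
  ring

theorem hasDerivAt_log_sin {a : ℝ} (ha : Real.sin a ≠ 0) :
    HasDerivAt (fun b => Real.log (Real.sin b)) (Real.cot a) a := by
  rw [Real.cot_eq_cos_div_sin]
  exact (Real.hasDerivAt_sin a).log ha

theorem sin_half_sub_ne_zero {a b : ℝ} (hne : a ≠ b) (hab : a < b + 2 * π)
    (hba : b < a + 2 * π) : Real.sin ((a - b) / 2) ≠ 0 := by
  rw [Ne, Real.sin_eq_zero_iff_of_lt_of_lt (by linarith) (by linarith)]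
  exact fun h => hne (by linarith)

end Cotangent

section AbsolutelyContinuous

variable {a b : ℝ}

theorem absolutelyContinuousOnInterval_comp_of_lipschitzOnWith {X Y : Type*}
    [PseudoMetricSpace X] [PseudoMetricSpace Y] {f : ℝ → X} {g : X → Y} {K : NNReal}
    (hg : LipschitzOnWith K g (f '' uIcc a b)) (hf : AbsolutelyContinuousOnInterval f a b) :
    AbsolutelyContinuousOnInterval (g ∘ f) a b := by
  unfold AbsolutelyContinuousOnInterval at hf ⊢
  refine squeeze_zero' (.of_forall fun _ => Finset.sum_nonneg fun _ _ => dist_nonneg) ?_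
    (by simpa only [mul_zero] using hf.const_mul (K : ℝ))
  rw [eventually_inf_principal]
  filter_upwards with E hE
  rw [Finset.mul_sum]
  exact Finset.sum_le_sum fun i hi => hg.dist_le_mul _ (mem_image_of_mem f (hE.1 i hi).1)
    _ (mem_image_of_mem f (hE.1 i hi).2)

theorem absolutelyContinuousOnInterval_comp_of_contDiffOn {E : Type*} [NormedAddCommGroup E]
    [NormedSpace ℝ E] {f : ℝ → ℝ} {g : ℝ → E} (hg : ContDiffOn ℝ 1 g (f '' uIcc a b))
    (hf : AbsolutelyContinuousOnInterval f a b) :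
    AbsolutelyContinuousOnInterval (g ∘ f) a b := by
  have hconvex : Convex ℝ (f '' uIcc a b) :=
    (isPreconnected_uIcc.image f hf.continuousOn).ordConnected.convex
  obtain ⟨K, hK⟩ := hg.exists_lipschitzOnWith one_ne_zero hconvex
    (isCompact_uIcc.image_of_continuousOn hf.continuousOn)
  exact absolutelyContinuousOnInterval_comp_of_lipschitzOnWith hK hf

theorem absolutelyContinuousOnInterval_congr {X : Type*} [PseudoMetricSpace X] {f g : ℝ → X}
    (hfg : EqOn f g (uIcc a b)) (hf : AbsolutelyContinuousOnInterval f a b) :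
    AbsolutelyContinuousOnInterval g a b := by
  refine hf.congr' ?_
  rw [EventuallyEq, eventually_inf_principal]
  filter_upwards with E hE
  exact Finset.sum_congr rfl fun i hi => by rw [hfg (hE.1 i hi).1, hfg (hE.1 i hi).2]

theorem absolutelyContinuousOnInterval_const {X : Type*} [PseudoMetricSpace X] (x : X) :
    AbsolutelyContinuousOnInterval (fun _ => x) a b :=
  (LipschitzWith.const x).lipschitzOnWith.absolutelyContinuousOnInterval

theorem absolutelyContinuousOnInterval_sum {ι F : Type*} [SeminormedAddCommGroup F]
    (s : Finset ι) {f : ι → ℝ → F} (hf : ∀ i ∈ s, AbsolutelyContinuousOnInterval (f i) a b) :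
    AbsolutelyContinuousOnInterval (fun t => ∑ i ∈ s, f i t) a b := by
  simp only [← Finset.sum_apply]
  exact Finset.sum_induction f (AbsolutelyContinuousOnInterval · a b) (fun _ _ => .add)
    (absolutelyContinuousOnInterval_const 0) hf

theorem ofReal_integral_le_lintegral_ofReal {α : Type*} [MeasurableSpace α] {μ : Measure α}
    (f : α → ℝ) : ENNReal.ofReal (∫ x, f x ∂μ) ≤ ∫⁻ x, ENNReal.ofReal (f x) ∂μ := by
  by_cases hf : Integrable f μ
  · rw [integral_eq_lintegral_pos_part_sub_lintegral_neg_part hf]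
    exact ENNReal.ofReal_le_of_le_toReal (sub_le_self _ ENNReal.toReal_nonneg)
  · simp [integral_undef hf]

theorem ofReal_sub_le_lintegral_of_neg_deriv_le {f g : ℝ → ℝ} (hab : a ≤ b)
    (hf : AbsolutelyContinuousOnInterval f a b)
    (hfg : ∀ᵐ s ∂volume.restrict (Ioc a b), -deriv f s ≤ g s) :
    ENNReal.ofReal (f a - f b) ≤ ∫⁻ s in Ioc a b, ENNReal.ofReal (g s) :=
  calc
    ENNReal.ofReal (f a - f b) = ENNReal.ofReal (∫ s in Ioc a b, -deriv f s) := by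
      rw [integral_neg, ← intervalIntegral.integral_of_le hab, hf.integral_deriv_eq_sub, neg_sub]
    _ ≤ ∫⁻ s in Ioc a b, ENNReal.ofReal (-deriv f s) := ofReal_integral_le_lintegral_ofReal _
    _ ≤ ∫⁻ s in Ioc a b, ENNReal.ofReal (g s) :=
      lintegral_mono_ae (hfg.mono fun _ hs => ENNReal.ofReal_le_ofReal hs)

end AbsolutelyContinuous

theorem sum_sum_mul_sub_of_antisymm {ι R : Type*} [Fintype ι] [CommRing R] {D : ι → ι → R}
    (hD : ∀ k l, D l k = -D k l) (c : ι → R) :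
    ∑ k, ∑ l, D k l * (c k - c l) = 2 * ∑ k, c k * ∑ l, D k l := by
  have hfst : ∑ k, ∑ l, D k l * c k = ∑ k, c k * ∑ l, D k l := by
    simp only [Finset.mul_sum, mul_comm]
  have hsnd : ∑ k, ∑ l, D k l * c l = -∑ k, c k * ∑ l, D k l := by
    rw [Finset.sum_comm, ← hfst, ← Finset.sum_neg_distrib]
    simp only [← Finset.sum_neg_distrib, ← neg_mul, ← hD]
  simp only [mul_sub, Finset.sum_sub_distrib, hfst, hsnd]
  ring

section Potential

variable {ι : Type*} [Fintype ι]

/-- The multiradial Loewner vector field `∑ₖ cot ((y - xᵏ)/2)` driven by the points `x`. Since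
`Real.cot 0 = 0`, its value at the driving point `xᵏ` is the sum over the other points, `φᵏ(x)`. -/
def cotSum (x : ι → ℝ) (y : ℝ) : ℝ := ∑ k, Real.cot ((y - x k) / 2)

/-- The potential `∑ₖ log |sin ((y - xᵏ)/2)|`, whose `y`-derivative is half of `cotSum x y`. The
absolute values are implicit in `Real.log`. -/
def logPotential (x : ι → ℝ) (y : ℝ) : ℝ := ∑ k, Real.log (Real.sin ((y - x k) / 2))

theorem sq_cotSum {x : ι → ℝ} {y : ℝ} (hx : Pairwise fun k l => Real.sin ((x k - x l) / 2) ≠ 0)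
    (hy : ∀ k, Real.sin ((y - x k) / 2) ≠ 0) :
    cotSum x y ^ 2 = ∑ k, Real.cot ((y - x k) / 2) ^ 2 +
      2 * ∑ k, Real.cot ((y - x k) / 2) * cotSum x (x k) - 2 * (Fintype.card ι).choose 2 := by
  set c : ι → ℝ := fun k => Real.cot ((y - x k) / 2)
  have hmul (k l : ι) : c k * c l =
      Real.cot ((x k - x l) / 2) * (c k - c l) - 1 + if k = l then c k ^ 2 + 1 else 0 := by
    rcases eq_or_ne k l with rfl | hkl
    · simp only [sub_self, mul_zero, if_true]
      ring
    · have harg : (y - x l) / 2 - (y - x k) / 2 = (x k - x l) / 2 := by ring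
      rw [if_neg hkl, add_zero, ← harg]
      exact real_cot_mul_cot (hy k) (hy l) (harg ▸ hx hkl)
  have hanti (k l : ι) : Real.cot ((x l - x k) / 2) = -Real.cot ((x k - x l) / 2) := by
    rw [← real_cot_neg]
    ring_nf
  calc
    cotSum x y ^ 2 = ∑ k, ∑ l, c k * c l := by rw [sq, cotSum, Finset.sum_mul_sum]
    _ = ∑ k, ∑ l, Real.cot ((x k - x l) / 2) * (c k - c l) - (Fintype.card ι : ℝ) ^ 2 +
        ∑ k, (c k ^ 2 + 1) := by
      simp only [hmul, Finset.sum_add_distrib, Finset.sum_sub_distrib, Finset.sum_ite_eq,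
        Finset.mem_univ, if_true, Finset.sum_const, Finset.card_univ, nsmul_eq_mul, mul_one,
        sq (Fintype.card ι : ℝ)]
    _ = _ := by
      rw [sum_sum_mul_sub_of_antisymm hanti, Finset.sum_add_distrib, Nat.cast_choose_two]
      simp only [cotSum, Finset.sum_const, Finset.card_univ, nsmul_eq_mul, mul_one]
      ring

theorem neg_sub_choose_two_le_sum_cot_mul {x : ι → ℝ} {y : ℝ}
    (hx : Pairwise fun k l => Real.sin ((x k - x l) / 2) ≠ 0)
    (hy : ∀ k, Real.sin ((y - x k) / 2) ≠ 0) (v : ι → ℝ) :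
    -(∑ k, (v k - 2 * cotSum x (x k)) ^ 2) / 8 - (Fintype.card ι).choose 2 ≤
      ∑ k, Real.cot ((y - x k) / 2) * ((cotSum x y - v k) / 2) := by
  set c : ι → ℝ := fun k => Real.cot ((y - x k) / 2)
  set u : ι → ℝ := fun k => v k - 2 * cotSum x (x k) with hu
  have hsquare : ∑ k, c k * ((cotSum x y - v k) / 2) =
      (∑ k, (c k - u k / 2) ^ 2) / 2 - (∑ k, u k ^ 2) / 8 - (Fintype.card ι).choose 2 :=
    calc
      ∑ k, c k * ((cotSum x y - v k) / 2) = (cotSum x y ^ 2 - ∑ k, c k * v k) / 2 := by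
        rw [sq, ← show ∑ k, c k = cotSum x y from rfl, Finset.sum_mul, ← Finset.sum_sub_distrib,
          Finset.sum_div]
        exact Finset.sum_congr rfl fun k _ => by ring
      _ = (∑ k, (c k ^ 2 - c k * u k)) / 2 - (Fintype.card ι).choose 2 := by
        rw [sq_cotSum hx hy]
        simp only [hu, mul_sub, Finset.sum_sub_distrib, mul_left_comm _ (2 : ℝ), ← Finset.mul_sum]
        ring
      _ = _ := by
        simp only [Finset.sum_div, ← Finset.sum_sub_distrib]
        exact congrArg (· - _) (Finset.sum_congr rfl fun k _ => by ring)
  have hnonneg : 0 ≤ ∑ k, (c k - u k / 2) ^ 2 := Finset.sum_nonneg fun _ _ => sq_nonneg _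
  linarith

theorem exp_logPotential_le_abs_sin {x : ι → ℝ} {y : ℝ}
    (hy : ∀ k, Real.sin ((y - x k) / 2) ≠ 0) (k : ι) :
    Real.exp (logPotential x y) ≤ |Real.sin ((y - x k) / 2)| := by
  rw [← Real.le_log_iff_exp_le (abs_pos.2 (hy k)), Real.log_abs, logPotential,
    ← Finset.add_sum_erase _ _ (Finset.mem_univ k)]
  refine add_le_of_nonpos_right (Finset.sum_nonpos fun l _ => ?_)
  rw [← Real.log_abs]
  exact Real.log_nonpos (abs_nonneg _) (Real.abs_sin_le_one _)

theorem hasDerivAt_logPotential {θ : ℝ → ι → ℝ} {ξ : ℝ → ℝ} {v : ι → ℝ} {w s : ℝ}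
    (hθ : ∀ k, HasDerivAt (fun t => θ t k) (v k) s) (hξ : HasDerivAt ξ w s)
    (hsin : ∀ k, Real.sin ((ξ s - θ s k) / 2) ≠ 0) :
    HasDerivAt (fun t => logPotential (θ t) (ξ t))
      (∑ k, Real.cot ((ξ s - θ s k) / 2) * ((w - v k) / 2)) s :=
  HasDerivAt.fun_sum fun k _ => HasDerivAt.comp (h₂ := fun a => Real.log (Real.sin a)) s
    (hasDerivAt_log_sin (hsin k)) ((hξ.sub (hθ k)).div_const 2)

theorem neg_deriv_logPotential_le {θ : ℝ → ι → ℝ} {ξ : ℝ → ℝ} {s : ℝ}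
    (hθ : ∀ k, DifferentiableAt ℝ (fun t => θ t k) s)
    (hξ : HasDerivAt ξ (cotSum (θ s) (ξ s)) s)
    (hpair : Pairwise fun k l => Real.sin ((θ s k - θ s l) / 2) ≠ 0)
    (hsin : ∀ k, Real.sin ((ξ s - θ s k) / 2) ≠ 0) :
    -deriv (fun t => logPotential (θ t) (ξ t)) s ≤
      (∑ k, (deriv (fun t => θ t k) s - 2 * cotSum (θ s) (θ s k)) ^ 2) / 8 +
        (Fintype.card ι).choose 2 := by
  rw [(hasDerivAt_logPotential (fun k => (hθ k).hasDerivAt) hξ hsin).deriv]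
  linarith [neg_sub_choose_two_le_sum_cot_mul hpair hsin fun k => deriv (fun t => θ t k) s]

theorem absolutelyContinuousOnInterval_logPotential {θ : ℝ → ι → ℝ} {ξ : ℝ → ℝ} {a b : ℝ}
    (hθ : ∀ k, AbsolutelyContinuousOnInterval (fun t => θ t k) a b)
    (hξ : AbsolutelyContinuousOnInterval ξ a b)
    (hsin : ∀ s ∈ uIcc a b, ∀ k, Real.sin ((ξ s - θ s k) / 2) ≠ 0) :
    AbsolutelyContinuousOnInterval (fun t => logPotential (θ t) (ξ t)) a b := by
  refine absolutelyContinuousOnInterval_sum _ fun k _ => ?_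
  have hhalf : AbsolutelyContinuousOnInterval (fun s => (ξ s - θ s k) / 2) a b := by
    simpa only [div_eq_inv_mul] using (hξ.fun_sub (hθ k)).const_mul (2⁻¹ : ℝ)
  refine absolutelyContinuousOnInterval_comp_of_contDiffOn
    (g := fun y => Real.log (Real.sin y)) (Real.contDiff_sin.contDiffOn.log ?_) hhalf
  rintro _ ⟨s, hs, rfl⟩
  exact hsin s hs k

theorem ofReal_logPotential_sub_le_lintegral {θ : ℝ → ι → ℝ} {ξ : ℝ → ℝ} {a b : ℝ} (hab : a ≤ b)
    (hθ : ∀ k, AbsolutelyContinuousOnInterval (fun t => θ t k) a b)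
    (hξ : AbsolutelyContinuousOnInterval ξ a b)
    (hpair : ∀ s ∈ Ioc a b, Pairwise fun k l => Real.sin ((θ s k - θ s l) / 2) ≠ 0)
    (hsin : ∀ s ∈ Icc a b, ∀ k, Real.sin ((ξ s - θ s k) / 2) ≠ 0)
    (hode : ∀ᵐ s ∂volume.restrict (Ioc a b), deriv ξ s = cotSum (θ s) (ξ s)) :
    ENNReal.ofReal (logPotential (θ a) (ξ a) - logPotential (θ b) (ξ b)) ≤
      (∫⁻ s in Ioc a b, ENNReal.ofReal
        (∑ k, (deriv (fun t => θ t k) s - 2 * cotSum (θ s) (θ s k)) ^ 2)) / 8 +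
      ENNReal.ofReal ((Fintype.card ι).choose 2 * (b - a)) := by
  set e : ℝ → ℝ := fun s => ∑ k, (deriv (fun t => θ t k) s - 2 * cotSum (θ s) (θ s k)) ^ 2
  set N : ℝ := ↑((Fintype.card ι).choose 2)
  rw [← uIcc_of_le hab] at hsin
  have hdrop : ∀ᵐ s ∂volume.restrict (Ioc a b),
      -deriv (fun t => logPotential (θ t) (ξ t)) s ≤ e s / 8 + N := by
    have hθdiff : ∀ᵐ s, ∀ k, s ∈ uIcc a b → DifferentiableAt ℝ (fun t => θ t k) s :=
      ae_all_iff.2 fun k => (hθ k).ae_differentiableAt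
    filter_upwards [hode, ae_restrict_of_ae hξ.ae_differentiableAt, ae_restrict_of_ae hθdiff,
      ae_restrict_mem measurableSet_Ioc] with s hs hξs hθs hmem
    have huIcc : s ∈ uIcc a b := Ioc_subset_Icc_self.trans Icc_subset_uIcc hmem
    exact neg_deriv_logPotential_le (fun k => hθs k huIcc) (hs ▸ (hξs huIcc).hasDerivAt)
      (hpair s hmem) (hsin s huIcc)
  refine (ofReal_sub_le_lintegral_of_neg_deriv_le hab
    (absolutelyContinuousOnInterval_logPotential hθ hξ hsin) hdrop).trans_eq ?_
  calc
    ∫⁻ s in Ioc a b, ENNReal.ofReal (e s / 8 + N)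
      = ∫⁻ s in Ioc a b, (8⁻¹ * ENNReal.ofReal (e s) + ENNReal.ofReal N) := by
        refine lintegral_congr fun s => ?_
        have he : 0 ≤ e s := Finset.sum_nonneg fun _ _ => sq_nonneg _
        rw [ENNReal.ofReal_add (div_nonneg he (by norm_num)) (Nat.cast_nonneg _),
          ENNReal.ofReal_div_of_pos (by norm_num), ENNReal.div_eq_inv_mul, ENNReal.ofReal_ofNat]
    _ = _ := by
        rw [lintegral_add_right _ measurable_const, lintegral_const_mul' _ _ (by simp),
          setLIntegral_const, Real.volume_Ioc, ← ENNReal.ofReal_mul (Nat.cast_nonneg _),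
          ENNReal.div_eq_inv_mul]

end Potential

section Configuration

variable {n : ℕ} {x : Fin n → ℝ}

theorem phi_eq_cotSum (x : Fin n → ℝ) (k : Fin n) : phi x k = cotSum x (x k) := by
  rw [phi, cotSum, ← Finset.add_sum_erase _ _ (Finset.mem_univ k)]
  simp [Real.cot_eq_cos_div_sin]

theorem pairwise_sin_half_sub_ne_zero_of_mem_Xspace (hx : x ∈ Xspace n) :
    Pairwise fun k l => Real.sin ((x k - x l) / 2) ≠ 0 :=
  fun k l hkl => sin_half_sub_ne_zero (hx.1.injective.ne hkl) (hx.2 k l) (hx.2 l k)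

theorem nextVal_le_add_two_pi (hx : x ∈ Xspace n) (j k : Fin n) : nextVal x j ≤ x k + 2 * π := by
  unfold nextVal
  split_ifs with h
  · exact (hx.2 _ k).le
  · gcongr
    exact hx.1.monotone (Fin.mk_le_of_le_val (Nat.zero_le _))

theorem nextVal_le_of_lt (hx : x ∈ Xspace n) {j k : Fin n} (hjk : j < k) : nextVal x j ≤ x k := by
  rw [nextVal, dif_pos (lt_of_le_of_lt hjk k.isLt)]
  exact hx.1.monotone (Fin.mk_le_of_le_val hjk)

theorem sin_half_sub_ne_zero_of_mem_arc (hx : x ∈ Xspace n) {j : Fin n} {y : ℝ}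
    (hy : y ∈ Ioo (x j) (nextVal x j)) (k : Fin n) : Real.sin ((y - x k) / 2) ≠ 0 := by
  obtain ⟨hjy, hyj⟩ := hy
  rcases le_or_gt k j with hkj | hjk
  · have hle : x k ≤ x j := hx.1.monotone hkj
    have hnext := nextVal_le_add_two_pi hx j k
    exact sin_half_sub_ne_zero (by linarith) (by linarith) (by linarith [Real.pi_pos])
  · have hnext := nextVal_le_of_lt hx hjk
    exact sin_half_sub_ne_zero (by linarith) (by linarith [Real.pi_pos])
      (by linarith [hx.2 k j])

theorem exists_abs_sin_half_nextVal_sub_eq (x : Fin n → ℝ) (j : Fin n) (y : ℝ) :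
    ∃ k, |Real.sin ((nextVal x j - y) / 2)| = |Real.sin ((y - x k) / 2)| := by
  unfold nextVal
  split_ifs with h
  · exact ⟨⟨j + 1, h⟩, by rw [← abs_neg, ← Real.sin_neg]; ring_nf⟩
  · exact ⟨⟨0, j.pos⟩, by rw [← Real.sin_pi_sub]; ring_nf⟩

theorem two_mul_exp_logPotential_le_min (hx : x ∈ Xspace n) {j : Fin n} {y : ℝ}
    (hy : y ∈ Ioo (x j) (nextVal x j)) :
    2 * Real.exp (logPotential x y) ≤ min (y - x j) (nextVal x j - y) := by
  have hexp := exp_logPotential_le_abs_sin (sin_half_sub_ne_zero_of_mem_arc hx hy)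
  have hsin {d : ℝ} (hd : 0 < d) (h : Real.exp (logPotential x y) ≤ |Real.sin (d / 2)|) :
      2 * Real.exp (logPotential x y) ≤ d := by
    have habs := h.trans Real.abs_sin_le_abs
    rw [abs_of_pos (half_pos hd)] at habs
    linarith
  obtain ⟨k, hk⟩ := exists_abs_sin_half_nextVal_sub_eq x j y
  exact le_min (hsin (sub_pos.2 hy.1) (hexp j)) (hsin (sub_pos.2 hy.2) (hk ▸ hexp k))

end Configuration

section Energy

variable {n : ℕ} {θ : ℝ → Fin n → ℝ} {T : ℝ}

theorem AbsCont1.absolutelyContinuousOnInterval {b : ℝ} {f : ℝ → ℝ} (hb : 0 ≤ b)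
    (hf : AbsCont1 b f) : AbsolutelyContinuousOnInterval f 0 b := by
  obtain ⟨v, hv, hfv⟩ := hf
  have hint : IntervalIntegrable v volume 0 b :=
    (intervalIntegrable_iff_integrableOn_Icc_of_le hb).2 hv
  refine absolutelyContinuousOnInterval_congr (fun t ht => ?_)
    ((absolutelyContinuousOnInterval_const (f 0)).fun_add
      (hint.absolutelyContinuousOnInterval_intervalIntegral left_mem_uIcc))
  exact (hfv t (uIcc_of_le hb ▸ ht)).symm

theorem AbsCont.absCont1 (hθ : AbsCont T θ) (k : Fin n) : AbsCont1 T fun t => θ t k := by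
  obtain ⟨v, hv, hθv⟩ := hθ
  exact ⟨fun s => v s k, hv k, fun t ht => hθv t ht k⟩

theorem AbsCont.mono {t : ℝ} (htT : t ≤ T) (hθ : AbsCont T θ) : AbsCont t θ := by
  obtain ⟨v, hv, hθv⟩ := hθ
  have hsub : Icc 0 t ⊆ Icc 0 T := Icc_subset_Icc_right htT
  exact ⟨v, fun k => (hv k).mono_set hsub, fun s hs => hθv s (hsub hs)⟩

theorem mEnergy_mono {t : ℝ} (htT : t ≤ T) : mEnergy n t θ ≤ mEnergy n T θ := by
  by_cases hT : AbsCont T θ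
  · rw [mEnergy, mEnergy, if_pos hT, if_pos (hT.mono htT)]
    gcongr
  · rw [show mEnergy n T θ = ⊤ from if_neg hT]
    exact le_top

variable {ξ : ℝ → ℝ}

theorem ofReal_logPotential_sub_le_mEnergy {t : ℝ} (ht : 0 ≤ t)
    (hX : ∀ s ∈ Ioc 0 t, θ s ∈ Xspace n) (hξ : AbsCont1 t ξ)
    (hsin : ∀ s ∈ Icc 0 t, ∀ k, Real.sin ((ξ s - θ s k) / 2) ≠ 0)
    (hode : ∀ᵐ s ∂volume.restrict (Ioc 0 t), deriv ξ s = cotSum (θ s) (ξ s)) :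
    ENNReal.ofReal (logPotential (θ 0) (ξ 0) - logPotential (θ t) (ξ t)) ≤
      mEnergy n t θ / 4 + ENNReal.ofReal (n.choose 2 * t) := by
  by_cases hθ : AbsCont t θ
  · have hdrop := ofReal_logPotential_sub_le_lintegral ht
      (fun k => (hθ.absCont1 k).absolutelyContinuousOnInterval ht)
      (hξ.absolutelyContinuousOnInterval ht)
      (fun s hs => pairwise_sin_half_sub_ne_zero_of_mem_Xspace (hX s hs)) hsin hode
    have hconst : ENNReal.ofReal (1 / 2) / 4 = 8⁻¹ := by
      rw [← ENNReal.ofReal_ofNat, ← ENNReal.ofReal_div_of_pos (by norm_num),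
        ← ENNReal.ofReal_ofNat, ← ENNReal.ofReal_inv_of_pos (by norm_num)]
      norm_num
    rw [mEnergy, if_pos hθ, ENNReal.mul_div_right_comm, hconst, ← ENNReal.div_eq_inv_mul]
    simpa only [phi_eq_cotSum, Fintype.card_fin, sub_zero] using hdrop
  · simp [mEnergy, hθ, ENNReal.top_div]

theorem exists_forall_le_logPotential {τ : ℝ} (hE : mEnergy n τ θ ≠ ⊤)
    (hX : ∀ t ∈ Ico 0 τ, θ t ∈ Xspace n) (hξ : ∀ b, 0 ≤ b → b < τ → AbsCont1 b ξ)
    (hsin : ∀ t ∈ Ico 0 τ, ∀ k, Real.sin ((ξ t - θ t k) / 2) ≠ 0)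
    (hode : ∀ᵐ s ∂volume.restrict (Ico 0 τ), deriv ξ s = cotSum (θ s) (ξ s)) :
    ∃ C, ∀ t ∈ Ico 0 τ, C ≤ logPotential (θ t) (ξ t) := by
  set B : ℝ≥0∞ := mEnergy n τ θ / 4 + ENNReal.ofReal (n.choose 2 * τ)
  have hB : B ≠ ⊤ := by finiteness
  refine ⟨logPotential (θ 0) (ξ 0) - B.toReal, fun t ⟨ht0, htτ⟩ => ?_⟩
  have hIcc : Icc 0 t ⊆ Ico 0 τ := Icc_subset_Ico_right htτ
  have hIoc : Ioc 0 t ⊆ Ico 0 τ := Ioc_subset_Icc_self.trans hIcc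
  have hdrop : ENNReal.ofReal (logPotential (θ 0) (ξ 0) - logPotential (θ t) (ξ t)) ≤ B :=
    calc
      _ ≤ mEnergy n t θ / 4 + ENNReal.ofReal (n.choose 2 * t) :=
        ofReal_logPotential_sub_le_mEnergy ht0 (fun s hs => hX s (hIoc hs)) (hξ t ht0 htτ)
          (fun s hs => hsin s (hIcc hs)) (ae_restrict_of_ae_restrict_of_subset hIoc hode)
      _ ≤ mEnergy n τ θ / 4 + ENNReal.ofReal (n.choose 2 * τ) := by
        gcongr
        exact mEnergy_mono htτ.le
  rw [ENNReal.ofReal_le_iff_le_toReal hB] at hdrop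
  linarith

theorem exists_pos_forall_le_min_of_mEnergy_ne_top {τ : ℝ} (hE : mEnergy n τ θ ≠ ⊤)
    (hX : ∀ t ∈ Ico 0 τ, θ t ∈ Xspace n) (hξ : ∀ b, 0 ≤ b → b < τ → AbsCont1 b ξ) {j : Fin n}
    (hmid : ∀ t ∈ Ico 0 τ, ξ t ∈ Ioo (θ t j) (nextVal (θ t) j))
    (hode : ∀ᵐ s ∂volume.restrict (Ico 0 τ), deriv ξ s = cotSum (θ s) (ξ s)) :
    ∃ c > 0, ∀ t ∈ Ico 0 τ, c ≤ min (ξ t - θ t j) (nextVal (θ t) j - ξ t) := by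
  obtain ⟨C, hC⟩ := exists_forall_le_logPotential hE hX hξ
    (fun t ht => sin_half_sub_ne_zero_of_mem_arc (hX t ht) (hmid t ht)) hode
  refine ⟨2 * Real.exp C, by positivity, fun t ht => ?_⟩
  calc
    2 * Real.exp C ≤ 2 * Real.exp (logPotential (θ t) (ξ t)) := by gcongr; exact hC t ht
    _ ≤ _ := two_mul_exp_logPotential_le_min (hX t ht) (hmid t ht)

end Energy

/-- Boundary points are not swallowed by the finite-energy multiradial
Loewner flow: if `ξ` stays in the `j`-th arc `(θ^j, θ^{j+1})`, solves the multiradial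
Loewner ODE `ξ' = ∑ₖ cot((ξ - θ^k)/2)`, and reaches the endpoints of the arc as
`t → τ⁻` for some `τ ≤ T`, then `J_T(θ) = ∞`. -/
theorem boundary_not_swallowed_multiradial
    (n : ℕ) (hn : 1 ≤ n) (T : ℝ) (hT : 0 < T)
    (θ : ℝ → Fin n → ℝ)
    (hcont : ContinuousOn θ (Icc 0 T))
    (hX : ∀ t ∈ Icc (0 : ℝ) T, θ t ∈ Xspace n)
    (j : Fin n) (τ : ℝ) (hτ0 : 0 < τ) (hτT : τ ≤ T)
    (ξ : ℝ → ℝ)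
    (hξac : ∀ b : ℝ, 0 ≤ b → b < τ → AbsCont1 b ξ)
    (hmid : ∀ t ∈ Ico (0 : ℝ) τ, θ t j < ξ t ∧ ξ t < nextVal (θ t) j)
    (hode : ∀ᵐ s ∂(volume.restrict (Ico (0 : ℝ) τ)),
      deriv ξ s = ∑ k : Fin n, Real.cot ((ξ s - θ s k) / 2))
    (hhit : Filter.liminf (fun t => min (ξ t - θ t j) (nextVal (θ t) j - ξ t))
      (𝓝[<] τ) = 0) :
    mEnergy n T θ = ⊤ := by
  by_contra hfin
  have hE : mEnergy n τ θ ≠ ⊤ := ne_top_of_le_ne_top hfin (mEnergy_mono hτT)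
  have hXτ : ∀ t ∈ Ico 0 τ, θ t ∈ Xspace n := fun t ht => hX t ⟨ht.1, ht.2.le.trans hτT⟩
  obtain ⟨c, hc, hle⟩ := exists_pos_forall_le_min_of_mEnergy_ne_top hE hXτ hξac hmid hode
  have hIco : ∀ᶠ t in 𝓝[<] τ, t ∈ Ico 0 τ :=
    mem_of_superset (Ioo_mem_nhdsLT hτ0) Ioo_subset_Ico_self
  have hbdd : ∀ᶠ t in 𝓝[<] τ, min (ξ t - θ t j) (nextVal (θ t) j - ξ t) ≤ 2 * π := by
    filter_upwards [hIco] with t ht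
    exact (min_le_left _ _).trans
      (by linarith [(hmid t ht).2, nextVal_le_add_two_pi (hXτ t ht) j j])
  have hliminf := le_liminf_of_le (isBoundedUnder_of_eventually_le hbdd).isCoboundedUnder_ge
    (hIco.mono hle)
  exact hc.not_ge (hhit ▸ hliminf)

end
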